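/- Choose one representative from each S_d-orbit on Tri^B(n,d). Then the corresponding elements ξ^𝐛_{𝐫,𝐬} form a 𝕜-basis of the free 𝕜-module S^A(n,d), and the corresponding elements η^𝐛_{𝐫,𝐬} form a 𝕜-basis of T^A_𝔞(n,d). -/

import Mathlib

open Finset

open scoped Classical TensorProduct

noncomputable section

namespace GS

/-- A *good pair* `(A, 𝔞)`: a `𝕜`-superalgebra `A = ev ⊕ od` which is free as a
`𝕜`-supermodule, together with a subalgebra `𝔞 = aa ⊆ A₀` such that `𝔞` and `A/𝔞` are free,
a complement `𝔠 = cc` of `𝔞` in `A₀`, and an `(A,𝔞)`-basis `B = B_𝔞 ⊔ B_𝔠 ⊔ B_1`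
(encoded by `bas : Basis β 𝕜 A` with the partition `part : β → Fin 3`,
where `0` = `B_𝔞`, `1` = `B_𝔠`, `2` = `B_1`). -/
structure GoodPair (𝕜 A β : Type) [CommRing 𝕜] [NonUnitalRing A] [Module 𝕜 A] : Type where
  ev : Submodule 𝕜 A
  od : Submodule 𝕜 A
  compl : IsCompl ev od
  mul_ee : ∀ a ∈ ev, ∀ b ∈ ev, a * b ∈ ev
  mul_eo : ∀ a ∈ ev, ∀ b ∈ od, a * b ∈ od
  mul_oe : ∀ a ∈ od, ∀ b ∈ ev, a * b ∈ od
  mul_oo : ∀ a ∈ od, ∀ b ∈ od, a * b ∈ ev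
  free_ev : Module.Free 𝕜 ev
  free_od : Module.Free 𝕜 od
  aa : Submodule 𝕜 A
  aa_le_ev : aa ≤ ev
  aa_mul : ∀ a ∈ aa, ∀ b ∈ aa, a * b ∈ aa
  free_aa : Module.Free 𝕜 aa
  free_quot : Module.Free 𝕜 (A ⧸ aa)
  cc : Submodule 𝕜 A
  aa_inf_cc : aa ⊓ cc = ⊥
  aa_sup_cc : aa ⊔ cc = ev
  bas : Module.Basis β 𝕜 A
  part : β → Fin 3
  bas_mem_aa : ∀ i, part i = 0 → bas i ∈ aa
  bas_mem_cc : ∀ i, part i = 1 → bas i ∈ cc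
  bas_mem_od : ∀ i, part i = 2 → bas i ∈ od

variable {𝕜 A β : Type} [CommRing 𝕜] [NonUnitalRing A] [Module 𝕜 A]

/-- An element is homogeneous if it lies in the even or the odd part. -/
def Homog (P : GoodPair 𝕜 A β) (a : A) : Prop := a ∈ P.ev ∨ a ∈ P.od

/-- `H`, the set of nonzero homogeneous elements of `A`. -/
def Hset (P : GoodPair 𝕜 A β) : Set A := {a | Homog P a ∧ a ≠ 0}

/-- `⟨𝐚,𝐜⟩ = #{(k,l) : k > l, a_k odd, c_l odd}` (the Koszul sign count). -/
def koz (od : Submodule 𝕜 A) {d : ℕ} (a c : Fin d → A) : ℕ :=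
  (univ.filter fun kl : Fin d × Fin d => kl.2 < kl.1 ∧ a kl.1 ∈ od ∧ c kl.2 ∈ od).card

/-- `⟨σ;𝐚⟩ = #{(k,l) : k < l, σ⁻¹k > σ⁻¹l, a_k and a_l odd}`. -/
def sgnc (od : Submodule 𝕜 A) {d : ℕ} (σ : Equiv.Perm (Fin d)) (a : Fin d → A) : ℕ :=
  (univ.filter fun kl : Fin d × Fin d =>
    kl.1 < kl.2 ∧ σ⁻¹ kl.2 < σ⁻¹ kl.1 ∧ a kl.1 ∈ od ∧ a kl.2 ∈ od).card

/-- `⟨𝐚,𝐫,𝐬⟩ = #{(k,l) : k < l, a_k, a_l odd, (a_k,r_k,s_k) > (a_l,r_l,s_l)}` with respect to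
the fixed total order `ord` on `A × [1,n] × [1,n]`. -/
def ang {n : ℕ} (od : Submodule 𝕜 A) (ord : LinearOrder (A × Fin n × Fin n))
    {d : ℕ} (a : Fin d → A) (r s : Fin d → Fin n) : ℕ :=
  (univ.filter fun kl : Fin d × Fin d =>
    kl.1 < kl.2 ∧ a kl.1 ∈ od ∧ a kl.2 ∈ od ∧
      ord.lt (a kl.2, r kl.2, s kl.2) (a kl.1, r kl.1, s kl.1)).card

/-- `(𝐚,𝐫,𝐬) ∈ Tri^H(n,d)`: all entries are nonzero homogeneous, and a repeated entry
triple forces evenness. -/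
def IsTriH (P : GoodPair 𝕜 A β) {n d : ℕ} (a : Fin d → A) (r s : Fin d → Fin n) : Prop :=
  (∀ k, a k ∈ Hset P) ∧
    ∀ k l : Fin d, k ≠ l → (a k, r k, s k) = (a l, r l, s l) → a k ∈ P.ev

/-- `(𝐛,𝐫,𝐬) ∈ Tri^B(n,d)` for words of basis elements. -/
def IsTriB (P : GoodPair 𝕜 A β) {n d : ℕ} (b : Fin d → β) (r s : Fin d → Fin n) : Prop :=
  ∀ k l : Fin d, k ≠ l → ((b k, r k, s k) : β × Fin n × Fin n) = (b l, r l, s l) →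
    P.part (b k) ≠ 2

/-- Minimal length representatives of the cosets `(S_e × S_f)\S_{e+f}`. -/
def IsShuffle (e f : ℕ) (σ : Equiv.Perm (Fin (e + f))) : Prop :=
  (∀ k l : Fin (e + f), k < l → (l : ℕ) < e → σ⁻¹ k < σ⁻¹ l) ∧
  (∀ k l : Fin (e + f), k < l → e ≤ (k : ℕ) → σ⁻¹ k < σ⁻¹ l)

/-- The tower of superalgebras `M_n(A)^{⊗d}`, `d ≥ 0`, axiomatised.  `X a r s` is the pure
tensor `ξ^{a_1}_{r_1,s_1} ⊗ ⋯ ⊗ ξ^{a_d}_{r_d,s_d}` of matrix units; it is multilinear in the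
`A`-entries, the pure tensors of basis elements form a basis, multiplication is the sign-twisted
(Koszul) componentwise one, `act` is the right action of the symmetric groups by superalgebra
automorphisms, `evT/odT` is the induced supermodule structure, `star` is the `*`-(shuffle)
product and `nab` gives the components of the deconcatenation coproduct `∇`. -/
structure Tower (𝕜 A β : Type) [CommRing 𝕜] [NonUnitalRing A] [Module 𝕜 A]
    (n : ℕ) (T : ℕ → Type) [∀ e, NonUnitalRing (T e)] [∀ e, Module 𝕜 (T e)]
    (P : GoodPair 𝕜 A β) : Type where
  X : ∀ {e : ℕ}, (Fin e → A) → (Fin e → Fin n) → (Fin e → Fin n) → T e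
  X_update_add : ∀ {e : ℕ} (a : Fin e → A) (r s : Fin e → Fin n) (k : Fin e) (x y : A),
    X (Function.update a k (x + y)) r s
      = X (Function.update a k x) r s + X (Function.update a k y) r s
  X_update_smul : ∀ {e : ℕ} (a : Fin e → A) (r s : Fin e → Fin n) (k : Fin e) (c : 𝕜) (x : A),
    X (Function.update a k (c • x)) r s = c • X (Function.update a k x) r s
  bas : ∀ e : ℕ, Module.Basis ((Fin e → β) × (Fin e → Fin n) × (Fin e → Fin n)) 𝕜 (T e)
  bas_eq : ∀ (e : ℕ) (b : Fin e → β) (r s : Fin e → Fin n),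
    bas e (b, r, s) = X (fun k => P.bas (b k)) r s
  X_mul : ∀ {e : ℕ} (a c : Fin e → A) (r s t u : Fin e → Fin n),
    (∀ k, Homog P (a k)) → (∀ k, Homog P (c k)) →
    X a r s * X c t u
      = if s = t then ((-1 : ℤ) ^ koz P.od a c) • X (fun k => a k * c k) r u else 0
  act : ∀ {e : ℕ}, Equiv.Perm (Fin e) → T e →ₗ[𝕜] T e
  act_act : ∀ {e : ℕ} (σ τ : Equiv.Perm (Fin e)) (x : T e), act τ (act σ x) = act (σ * τ) x
  act_mul : ∀ {e : ℕ} (σ : Equiv.Perm (Fin e)) (x y : T e), act σ (x * y) = act σ x * act σ y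
  act_X : ∀ {e : ℕ} (σ : Equiv.Perm (Fin e)) (a : Fin e → A) (r s : Fin e → Fin n),
    (∀ k, Homog P (a k)) →
    act σ (X a r s) = ((-1 : ℤ) ^ sgnc P.od σ a) • X (a ∘ σ) (r ∘ σ) (s ∘ σ)
  evT : ∀ e : ℕ, Submodule 𝕜 (T e)
  odT : ∀ e : ℕ, Submodule 𝕜 (T e)
  complT : ∀ e : ℕ, IsCompl (evT e) (odT e)
  X_mem_evT : ∀ {e : ℕ} (a : Fin e → A) (r s : Fin e → Fin n), (∀ k, Homog P (a k)) →
    Even (univ.filter fun k => a k ∈ P.od).card → X a r s ∈ evT e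
  X_mem_odT : ∀ {e : ℕ} (a : Fin e → A) (r s : Fin e → Fin n), (∀ k, Homog P (a k)) →
    ¬ Even (univ.filter fun k => a k ∈ P.od).card → X a r s ∈ odT e
  star : ∀ {e f : ℕ}, T e →ₗ[𝕜] T f →ₗ[𝕜] T (e + f)
  star_X : ∀ {e f : ℕ} (a : Fin e → A) (r s : Fin e → Fin n)
      (c : Fin f → A) (t u : Fin f → Fin n),
    star (X a r s) (X c t u)
      = ∑ σ ∈ univ.filter (IsShuffle e f),
          act σ (X (Fin.append a c) (Fin.append r t) (Fin.append s u))
  nab : ∀ e f : ℕ, T (e + f) →ₗ[𝕜] TensorProduct 𝕜 (T e) (T f)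
  nab_X : ∀ (e f : ℕ) (a : Fin (e + f) → A) (r s : Fin (e + f) → Fin n),
    nab e f (X a r s)
      = (X (a ∘ Fin.castAdd f) (r ∘ Fin.castAdd f) (s ∘ Fin.castAdd f))
          ⊗ₜ[𝕜] (X (a ∘ Fin.natAdd e) (r ∘ Fin.natAdd e) (s ∘ Fin.natAdd e))

variable {n : ℕ} {T : ℕ → Type} [∀ e, NonUnitalRing (T e)] [∀ e, Module 𝕜 (T e)]

/-- `ξ^𝐚_{𝐫,𝐬}`, the signed sum of the pure tensors over the `S_d`-orbit of `(𝐚,𝐫,𝐬)`. -/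
def xiH {P : GoodPair 𝕜 A β} (D : Tower 𝕜 A β n T P) (ord : LinearOrder (A × Fin n × Fin n))
    {d : ℕ} (a : Fin d → A) (r s : Fin d → Fin n) : T d :=
  ∑ w ∈ (univ.image fun σ : Equiv.Perm (Fin d) => (a ∘ σ, r ∘ σ, s ∘ σ)),
    ((-1 : ℤ) ^ (ang P.od ord a r s + ang P.od ord w.1 w.2.1 w.2.2)) • D.X w.1 w.2.1 w.2.2

/-- `ξ^𝐛_{𝐫,𝐬}` for a word `𝐛` of basis elements. -/
def xiB {P : GoodPair 𝕜 A β} (D : Tower 𝕜 A β n T P) (ord : LinearOrder (A × Fin n × Fin n))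
    {d : ℕ} (b : Fin d → β) (r s : Fin d → Fin n) : T d :=
  xiH D ord (fun k => P.bas (b k)) r s

/-- `[𝐛,𝐫,𝐬]^b_{r,s}`, the multiplicity of an entry triple in a word triple. -/
def mco {n d : ℕ} (b : Fin d → β) (r s : Fin d → Fin n) (w : β × Fin n × Fin n) : ℕ :=
  (univ.filter fun k => ((b k, r k, s k) : β × Fin n × Fin n) = w).card

/-- `∏ ([𝐛,𝐫,𝐬]^b_{r,s})!` over the entry triples whose basis element satisfies `sel`
(e.g. `sel i = (part i = 1)` gives `[𝐛,𝐫,𝐬]^!_𝔠`). -/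
def facSel (sel : β → Prop) {n d : ℕ} (b : Fin d → β) (r s : Fin d → Fin n) : ℕ :=
  ∏ w ∈ ((univ.image fun k => ((b k, r k, s k) : β × Fin n × Fin n)).filter fun w => sel w.1),
    Nat.factorial (mco b r s w)

/-- `η^𝐛_{𝐫,𝐬} := [𝐛,𝐫,𝐬]^!_𝔠 • ξ^𝐛_{𝐫,𝐬}`. -/
def eta {P : GoodPair 𝕜 A β} (D : Tower 𝕜 A β n T P) (ord : LinearOrder (A × Fin n × Fin n))
    {d : ℕ} (b : Fin d → β) (r s : Fin d → Fin n) : T d :=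
  facSel (fun i => P.part i = 1) b r s • xiB D ord b r s

/-- `S^A(n,d) = (M_n(A)^{⊗d})^{S_d}`, the invariants. -/
def SchurS {P : GoodPair 𝕜 A β} (D : Tower 𝕜 A β n T P) (d : ℕ) : Submodule 𝕜 (T d) where
  carrier := {x | ∀ σ : Equiv.Perm (Fin d), D.act σ x = x}
  add_mem' := by
    intro x y hx hy σ
    rw [map_add, hx σ, hy σ]
  zero_mem' := by
    intro σ; exact map_zero _
  smul_mem' := by
    intro c x hx σ
    rw [map_smul, hx σ]

/-- The generalized Schur algebra `T^A_𝔞(n,d)`, the `𝕜`-span of the `η^𝐛_{𝐫,𝐬}`,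
`(𝐛,𝐫,𝐬) ∈ Tri^B(n,d)`. -/
def SchurT {P : GoodPair 𝕜 A β} (D : Tower 𝕜 A β n T P) (ord : LinearOrder (A × Fin n × Fin n))
    (d : ℕ) : Submodule 𝕜 (T d) :=
  Submodule.span 𝕜 {x | ∃ b r s, IsTriB P b r s ∧ x = eta D ord b r s}

/-- `S^𝔞(n,d) = (M_n(𝔞)^{⊗d})^{S_d} ⊆ S^A(n,d)`. -/
def SchurA {P : GoodPair 𝕜 A β} (D : Tower 𝕜 A β n T P) (d : ℕ) : Submodule 𝕜 (T d) :=
  Submodule.span 𝕜 {x | ∃ a r s, (∀ k, a k ∈ P.aa) ∧ x = D.X a r s} ⊓ SchurS D d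

/-- `ξ^f = E^f ⊗ ⋯ ⊗ E^f` for `f ∈ A`. -/
def xiIdem {P : GoodPair 𝕜 A β} (D : Tower 𝕜 A β n T P) (f : A) (d : ℕ) : T d :=
  ∑ r : Fin d → Fin n, D.X (fun _ => f) r r

/-- Transport along an equality of degrees. -/
def tcast {e f : ℕ} (h : e = f) : T e ≃ₗ[𝕜] T f := by
  subst h; exact LinearEquiv.refl 𝕜 (T e)

/-- Iterated `*`-product `x_1 * x_2 * ⋯ * x_d` of degree-one pure tensors read off from a
word (associated to the left). -/
def starIter {P : GoodPair 𝕜 A β} (D : Tower 𝕜 A β n T P) :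
    ∀ (e : ℕ), (Fin e → A) → (Fin e → Fin n) → (Fin e → Fin n) → T e
  | 0, _, _, _ => D.X Fin.elim0 Fin.elim0 Fin.elim0
  | (e + 1), a, r, s =>
      D.star (starIter D e (a ∘ Fin.castSucc) (r ∘ Fin.castSucc) (s ∘ Fin.castSucc))
        (D.X (fun _ : Fin 1 => a (Fin.last e)) (fun _ => r (Fin.last e)) (fun _ => s (Fin.last e)))

/-- Iterated `*`-product of blockwise given elements. -/
def starBlocks {P : GoodPair 𝕜 A β} (D : Tower 𝕜 A β n T P) :
    ∀ (q : ℕ) (sz : Fin q → ℕ), (∀ m, T (sz m)) → T (∑ m, sz m)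
  | 0, sz, _ => cast (congrArg T (Fin.sum_univ_zero sz).symm) (D.X Fin.elim0 Fin.elim0 Fin.elim0)
  | (q + 1), sz, x =>
      cast (congrArg T (Fin.sum_univ_castSucc sz).symm)
        (D.star (starBlocks D q (fun m => sz m.castSucc) (fun m => x m.castSucc))
          (x (Fin.last q)))

/-- Concatenation of a tuple of words of lengths `sz 0, …, sz (q-1)`. -/
def concatB {α : Type} : ∀ {q : ℕ} (sz : Fin q → ℕ), (∀ m, Fin (sz m) → α) → Fin (∑ m, sz m) → α
  | 0, sz, _ => fun k => Fin.elim0 (cast (congrArg Fin (Fin.sum_univ_zero sz)) k)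
  | (q + 1), sz, f => fun k =>
      Fin.append (concatB (fun m => sz m.castSucc) (fun m => f m.castSucc)) (f (Fin.last q))
        (cast (congrArg Fin (Fin.sum_univ_castSucc sz)) k)

/-- A triple of words `(𝐛,𝐫,𝐬)`. -/
abbrev WordTriple (β : Type) (n d : ℕ) : Type :=
  (Fin d → β) × (Fin d → Fin n) × (Fin d → Fin n)

/-- The diagonal right place-permutation action on triples of words. -/
def wAct {d : ℕ} (w : WordTriple β n d) (σ : Equiv.Perm (Fin d)) : WordTriple β n d :=
  (w.1 ∘ σ, w.2.1 ∘ σ, w.2.2 ∘ σ)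

/-- The `k`-th entry triple `(b_k, r_k, s_k)` (with `b_k` realized in `A`). -/
def entryAt (P : GoodPair 𝕜 A β) {n d : ℕ} (w : WordTriple β n d) (k : Fin d) :
    A × Fin n × Fin n :=
  (P.bas (w.1 k), w.2.1 k, w.2.2 k)

/-- The lexicographic order on triples of words induced by the total order `ord`. -/
def wordLE (P : GoodPair 𝕜 A β) {n : ℕ} (ord : LinearOrder (A × Fin n × Fin n)) {d : ℕ}
    (w w' : WordTriple β n d) : Prop :=
  (∀ k, entryAt P w k = entryAt P w' k) ∨
    ∃ l : Fin d, (∀ k, k < l → entryAt P w k = entryAt P w' k) ∧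
      ord.lt (entryAt P w l) (entryAt P w' l)

/-- `Tri^B_0(n,d)`: the lexicographically minimal representatives of the `S_d`-orbits on
`Tri^B(n,d)`. -/
def IsTri0 (P : GoodPair 𝕜 A β) {n : ℕ} (ord : LinearOrder (A × Fin n × Fin n)) {d : ℕ}
    (w : WordTriple β n d) : Prop :=
  IsTriB P w.1 w.2.1 w.2.2 ∧ ∀ σ : Equiv.Perm (Fin d), wordLE P ord w (wAct w σ)

/-- The first `l` letters of each word. -/
def firstW {d : ℕ} (l : ℕ) (hl : l ≤ d) (w : WordTriple β n d) : WordTriple β n l :=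
  (fun k => w.1 ⟨k, lt_of_lt_of_le k.isLt hl⟩,
   fun k => w.2.1 ⟨k, lt_of_lt_of_le k.isLt hl⟩,
   fun k => w.2.2 ⟨k, lt_of_lt_of_le k.isLt hl⟩)

/-- The last `d - l` letters of each word. -/
def lastW {d : ℕ} (l : ℕ) (hl : l ≤ d) (w : WordTriple β n d) : WordTriple β n (d - l) :=
  (fun k => w.1 ⟨l + (k : ℕ), by have := k.isLt; omega⟩,
   fun k => w.2.1 ⟨l + (k : ℕ), by have := k.isLt; omega⟩,
   fun k => w.2.2 ⟨l + (k : ℕ), by have := k.isLt; omega⟩)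

/-- Concatenation of words. -/
def appF {α : Type} {d : ℕ} (l : ℕ) (hl : l ≤ d) (f : Fin l → α) (g : Fin (d - l) → α) :
    Fin d → α :=
  fun k => if hk : (k : ℕ) < l then f ⟨k, hk⟩ else g ⟨(k : ℕ) - l, by have := k.isLt; omega⟩

/-- Concatenation `T¹T²` of two triples of words. -/
def concatW {d : ℕ} (l : ℕ) (hl : l ≤ d) (p : WordTriple β n l × WordTriple β n (d - l)) :
    WordTriple β n d :=
  (appF l hl p.1.1 p.2.1, appF l hl p.1.2.1 p.2.2.1, appF l hl p.1.2.2 p.2.2.2)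

/-- `Spl_l(T)`, the set of `l`-splits of `T ∈ Tri^B_0(n,d)`. -/
def splitsF (P : GoodPair 𝕜 A β) {n : ℕ} (ord : LinearOrder (A × Fin n × Fin n)) {d : ℕ}
    (l : ℕ) (hl : l ≤ d) (w : WordTriple β n d) :
    Finset (WordTriple β n l × WordTriple β n (d - l)) :=
  (univ.image fun σ : Equiv.Perm (Fin d) =>
      (firstW l hl (wAct w σ), lastW l hl (wAct w σ))).filter
    fun p => IsTri0 P ord p.1 ∧ IsTri0 P ord p.2

/-- The number of inversions (= Coxeter length) of a permutation. -/
def invCount {d : ℕ} (σ : Equiv.Perm (Fin d)) : ℕ :=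
  (univ.filter fun kl : Fin d × Fin d => kl.1 < kl.2 ∧ σ kl.2 < σ kl.1).card

/-- The submodule `{x | x·ε = x}` (for an idempotent `ε` this is `R·ε`). -/
def rfix (𝕜 : Type) {R : Type} [CommRing 𝕜] [NonUnitalRing R] [Module 𝕜 R]
    [IsScalarTower 𝕜 R R] (ε : R) : Submodule 𝕜 R where
  carrier := {x | x * ε = x}
  add_mem' := by
    intro x y hx hy
    simp only [Set.mem_setOf_eq] at *
    rw [add_mul, hx, hy]
  zero_mem' := by simp
  smul_mem' := by
    intro c x hx
    simp only [Set.mem_setOf_eq] at *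
    rw [smul_mul_assoc, hx]

/-- Right `εSε`-module endomorphism property for a map of `S·ε = M ⊓ rfix ε`,
where `S` is the (possibly non-unital) algebra realized as the submodule `M` of `R`. -/
def IsEquivar (𝕜 : Type) {R : Type} [CommRing 𝕜] [NonUnitalRing R] [Module 𝕜 R]
    [IsScalarTower 𝕜 R R] (M : Submodule 𝕜 R) (ε : R)
    (f : ↥(M ⊓ rfix 𝕜 ε) →ₗ[𝕜] ↥(M ⊓ rfix 𝕜 ε)) : Prop :=
  ∀ (x : ↥(M ⊓ rfix 𝕜 ε)) (c : R), c ∈ M → ε * c * ε = c →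
    ∀ h : (x : R) * c ∈ M ⊓ rfix 𝕜 ε,
      ((f ⟨(x : R) * c, h⟩ : ↥(M ⊓ rfix 𝕜 ε)) : R) = (f x : R) * c

/-- `ε` is a *double centralizer idempotent* for the algebra `M ⊆ R`: the left
multiplication map `λ : M → End_{εMε}(Mε)` is bijective. -/
def IsDCI (𝕜 : Type) {R : Type} [CommRing 𝕜] [NonUnitalRing R] [Module 𝕜 R]
    [IsScalarTower 𝕜 R R] (M : Submodule 𝕜 R) (ε : R) : Prop :=
  (∀ s ∈ M, ∀ s' ∈ M, (∀ x ∈ M ⊓ rfix 𝕜 ε, s * x = s' * x) → s = s') ∧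
  (∀ f : ↥(M ⊓ rfix 𝕜 ε) →ₗ[𝕜] ↥(M ⊓ rfix 𝕜 ε), IsEquivar 𝕜 M ε f →
    ∃ s ∈ M, ∀ x : ↥(M ⊓ rfix 𝕜 ε), (f x : R) = s * (x : R))

/-!
The pure tensors of basis elements form a basis of `M_n(A)^{⊗d}` that `S_d` permutes up to signs.
Hence the coefficients of an invariant along an orbit all agree up to sign, and an invariant is
determined by one coefficient per orbit.

On `Tri^B(n,d)` the cocycle `(-1)^⟨σ;𝐛⟩` is the coboundary of `(-1)^⟨𝐛,𝐫,𝐬⟩`, which makes the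
signed orbit sums `ξ` invariant. A word outside `Tri^B(n,d)` repeats an odd entry; interchanging
the two copies fixes the word and reverses the sign, so the corresponding coefficient `c` of an
invariant satisfies `c = -c` and vanishes. Finally `η` is `ξ` multiplied by a nonzero natural
number which is constant on orbits.
-/

section PairCount

variable {ι : Type*} [Fintype ι] [LinearOrder ι]

/-- The number of pairs of places `i < j` related by `r`: the common shape of the sign exponents
`sgnc` and `ang`. -/
def pairCount (r : ι → ι → Prop) : ℕ :=
  (univ.filter fun p : ι × ι => p.1 < p.2 ∧ r p.1 p.2).card

lemma pairCount_congr {r s : ι → ι → Prop} (h : ∀ i j, i < j → (r i j ↔ s i j)) :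
    pairCount r = pairCount s :=
  congrArg card <| filter_congr fun p _ => and_congr_right (h p.1 p.2)

lemma pairCount_eq_card_sym2 {r : ι → ι → Prop} (hr : Std.Symm r) :
    pairCount r = (univ.filter fun z : Sym2 ι => ¬ z.IsDiag ∧ z ∈ Sym2.fromRel hr).card := by
  have h := sum_sym2_filter_not_isDiag univ fun z => if z ∈ Sym2.fromRel hr then 1 else 0
  rw [sum_boole, sum_boole, filter_filter, filter_filter, sym2_univ, Nat.cast_id,
    Nat.cast_id] at h
  rw [h, pairCount]
  congr 1
  ext p
  simp only [mem_filter, mem_univ, true_and, mem_offDiag, Sym2.fromRel_prop]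
  exact ⟨fun hp => ⟨hp.1.ne, hp⟩, fun hp => hp.2⟩

lemma pairCount_comp_perm {r : ι → ι → Prop} (hr : Std.Symm r) (σ : Equiv.Perm ι) :
    pairCount (fun i j => r (σ i) (σ j)) = pairCount r := by
  rw [pairCount_eq_card_sym2 hr, pairCount_eq_card_sym2 (hr.comap σ)]
  refine card_bijective (Sym2.map σ)
    (Finite.injective_iff_bijective.1 (Sym2.map.injective σ.injective)) fun z => ?_
  induction z with | _ i j => simp [Function.onFun]

lemma even_pairCount_add_xor (r s : ι → ι → Prop) :
    Even (pairCount r + (pairCount s + pairCount fun i j => ¬ (r i j ↔ s i j))) := by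
  simp only [pairCount, card_filter, ← sum_add_distrib]
  refine even_sum _ fun p _ => ?_
  by_cases hr : r p.1 p.2 <;> by_cases hs : s p.1 p.2 <;> by_cases hp : p.1 < p.2 <;>
    simp [hr, hs, hp]

lemma even_pairCount_inv_add {o : ι → Prop} {g : ι → ι → Prop}
    (hg : ∀ i j, i ≠ j → o i → o j → (g i j ↔ ¬ g j i)) (σ : Equiv.Perm ι) :
    Even ((pairCount fun i j => σ⁻¹ j < σ⁻¹ i ∧ o i ∧ o j) +
      ((pairCount fun i j => o i ∧ o j ∧ g i j) +
        pairCount fun i j => o (σ i) ∧ o (σ j) ∧ g (σ i) (σ j))) := by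
  -- Read as unordered pairs of places of the original word, the pairs related by `g` after
  -- permuting are those whose `g`-relation disagrees with being inverted by `σ`.
  let h (i j : ι) : Prop := ¬ ((σ⁻¹ j < σ⁻¹ i ∧ o i ∧ o j) ↔ (o i ∧ o j ∧ g i j))
  have hsymm : Std.Symm h := by
    refine ⟨fun i j hij => ?_⟩
    rcases eq_or_ne i j with rfl | hne
    · exact hij
    have hlt : σ⁻¹ i < σ⁻¹ j ↔ ¬ σ⁻¹ j < σ⁻¹ i :=
      ⟨fun h => h.not_gt, (σ⁻¹.injective.ne hne).lt_or_gt.resolve_right⟩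
    have := hg i j hne
    tauto
  have hperm : (pairCount fun i j => o (σ i) ∧ o (σ j) ∧ g (σ i) (σ j)) = pairCount h := by
    rw [← pairCount_comp_perm hsymm σ]
    refine pairCount_congr fun i j hij => ?_
    simp [h, hij.not_gt]
  rw [hperm]
  exact even_pairCount_add_xor _ _

lemma odd_pairCount_inv_swap {o : ι → Prop} {k l : ι} (hkl : k < l) (hk : o k) (hl : o l) :
    Odd (pairCount fun i j => (Equiv.swap k l)⁻¹ j < (Equiv.swap k l)⁻¹ i ∧ o i ∧ o j) := by
  -- A tournament in which `k` and `l` compare equally to every other place, so that swapping them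
  -- reverses only the pair `(k, l)`.
  let c (i : ι) : ι := if i = l then k else i
  let g (i j : ι) : Prop := c j < c i ∨ (i = l ∧ j = k)
  have hg : ∀ i j, i ≠ j → o i → o j → (g i j ↔ ¬ g j i) := by grind
  have hcard : (pairCount fun i j => o (Equiv.swap k l i) ∧ o (Equiv.swap k l j) ∧
      g (Equiv.swap k l i) (Equiv.swap k l j)) = (pairCount fun i j => o i ∧ o j ∧ g i j) + 1 := by
    rw [pairCount, pairCount, ← card_insert_of_notMem (a := (k, l)) (by simp [g, c, hkl.ne])]
    congr 1
    ext ⟨i, j⟩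
    simp only [mem_filter, mem_insert, mem_univ, true_and, Prod.mk.injEq]
    grind
  have := even_pairCount_inv_add hg (Equiv.swap k l)
  grind

end PairCount

lemma linearIndependent_nsmul {K M κ : Type*} [Ring K] [IsAddTorsionFree K] [AddCommGroup M]
    [Module K M] {v : κ → M} (hv : LinearIndependent K v) {m : κ → ℕ} (hm : ∀ i, m i ≠ 0) :
    LinearIndependent K fun i => m i • v i := by
  rw [linearIndependent_iff'] at hv ⊢
  intro s c hc i hi
  have : m i • c i = 0 :=
    hv s (fun i => m i • c i) (by simpa only [smul_comm (c _), smul_assoc] using hc) i hi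
  exact (smul_eq_zero_iff_right (hm i)).1 this

section MonomialAction

variable {K ι M G : Type*} [CommRing K] [AddCommGroup M] [Module K M]

/-- The vectors fixed by every member of a family of endomorphisms. -/
def commonFixed (ρ : G → M →ₗ[K] M) : Submodule K M :=
  ⨅ g, LinearMap.eqLocus (ρ g) LinearMap.id

lemma mem_commonFixed {ρ : G → M →ₗ[K] M} {x : M} : x ∈ commonFixed ρ ↔ ∀ g, ρ g x = x := by
  simp [commonFixed, Submodule.mem_iInf, LinearMap.mem_eqLocus]

variable [Group G] [MulAction G ι] (e : Module.Basis ι K M)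

section Monomial

variable {e} {ρ : G → M →ₗ[K] M} {χ : G → ι → K}

lemma repr_monomial (hρ : ∀ g i, ρ g (e i) = χ g i • e (g • i)) (g : G) (x : M)
    (i : ι) : e.repr (ρ g x) (g • i) = χ g i * e.repr x i := by
  have h : e.coord (g • i) ∘ₗ ρ g = χ g i • e.coord i := e.ext fun j => by
    simp +contextual [hρ, Finsupp.single_apply]
  exact LinearMap.congr_fun h x

lemma mem_commonFixed_iff_repr (hρ : ∀ g i, ρ g (e i) = χ g i • e (g • i)) {x : M} :
    x ∈ commonFixed ρ ↔ ∀ g i, e.repr x (g • i) = χ g i * e.repr x i := by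
  simp only [mem_commonFixed, ← repr_monomial hρ]
  refine forall_congr' fun g => ⟨fun h i => by rw [h], fun h => e.ext_elem fun i => ?_⟩
  simpa using (h (g⁻¹ • i)).symm

lemma repr_eq_zero_of_stabilizer (hρ : ∀ g i, ρ g (e i) = χ g i • e (g • i)) {x : M}
    (hx : x ∈ commonFixed ρ) {i : ι}
    (hi : ∃ g : G, g • i = i ∧ ∀ c, c = χ g i * c → c = 0) : e.repr x i = 0 := by
  obtain ⟨g, hg, h⟩ := hi
  apply h
  conv_lhs => rw [← hg, (mem_commonFixed_iff_repr hρ).1 hx]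

lemma eq_zero_of_repr_eq_zero_on (hρ : ∀ g i, ρ g (e i) = χ g i • e (g • i))
    {S R : Set ι}
    (hS : ∀ i ∉ S, ∃ g : G, g • i = i ∧ ∀ c, c = χ g i * c → c = 0)
    (hR : ∀ i ∈ S, ∃ r ∈ R, i ∈ MulAction.orbit G r) {x : M} (hx : x ∈ commonFixed ρ)
    (h : ∀ r ∈ R, e.repr x r = 0) : x = 0 := by
  refine e.ext_elem fun i => ?_
  rw [map_zero, Finsupp.zero_apply]
  by_cases hi : i ∈ S
  · obtain ⟨r, hr, g, rfl⟩ := hR i hi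
    dsimp only
    rw [(mem_commonFixed_iff_repr hρ).1 hx, h r hr, mul_zero]
  · exact repr_eq_zero_of_stabilizer hρ hx (hS i hi)

end Monomial

variable (ε : ι → Kˣ) [Finite G]

variable (G) in
/-- The sum of the basis vectors over the `G`-orbit of `i`, weighted by the signs (or more general
units) `ε` and normalized to have coefficient `1` at `i`. -/
def orbitSum (i : ι) : M :=
  ∑ j ∈ (Set.finite_range fun g : G => g • i).toFinset, ((ε i)⁻¹ * ε j) • e j

lemma repr_orbitSum (i j : ι) :
    e.repr (orbitSum G e ε i) j =
      if j ∈ MulAction.orbit G i then (((ε i)⁻¹ * ε j : Kˣ) : K) else 0 := by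
  simp [orbitSum, Units.smul_def, Finsupp.finsetSum_apply, Finsupp.single_apply,
    MulAction.mem_orbit_iff]

lemma orbitSum_of_mem_orbit {i j : ι} (h : j ∈ MulAction.orbit G i) :
    orbitSum G e ε j = ((ε j)⁻¹ * ε i) • orbitSum G e ε i := by
  have horb : (Set.range fun g : G => g • j) = Set.range fun g : G => g • i :=
    MulAction.orbit_eq_iff.2 h
  simp only [orbitSum, horb, smul_sum, smul_smul, mul_assoc, mul_inv_cancel_left]

lemma orbitSum_mem_commonFixed {ρ : G → M →ₗ[K] M} {χ : G → ι → K}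
    (hρ : ∀ g i, ρ g (e i) = χ g i • e (g • i)) {i : ι}
    (hε : ∀ g, ∀ j ∈ MulAction.orbit G i, (ε (g • j) : K) = χ g j * ε j) :
    orbitSum G e ε i ∈ commonFixed ρ := by
  refine (mem_commonFixed_iff_repr hρ).2 fun g j => ?_
  have hmem : g • j ∈ MulAction.orbit G i ↔ j ∈ MulAction.orbit G i := by
    rw [← MulAction.orbit_eq_iff, ← MulAction.orbit_eq_iff, MulAction.orbit_smul]
  simp only [repr_orbitSum, hmem]
  split_ifs with h
  · simp only [Units.val_mul, hε g j h]
    ring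
  · rw [mul_zero]

/-- `R` picks exactly one point from every `G`-orbit meeting `S`. -/
structure IsOrbitTransversal (G : Type*) [Group G] [MulAction G ι] (S R : Set ι) : Prop where
  subset : R ⊆ S
  existsUnique : ∀ i ∈ S, ∃! r, r ∈ R ∧ r ∈ MulAction.orbit G i

variable {S R : Set ι}

lemma repr_orbitSum_of_mem (hR : IsOrbitTransversal G S R) (r r' : R) :
    e.repr (orbitSum G e ε (r : ι)) r' = if r' = r then 1 else 0 := by
  rw [repr_orbitSum]
  rcases eq_or_ne r' r with rfl | hne
  · simp
  · rw [if_neg hne, if_neg]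
    exact fun horb => hne <| Subtype.ext <| (hR.existsUnique r (hR.subset r.2)).unique
      ⟨r'.2, horb⟩ ⟨r.2, MulAction.mem_orbit_self _⟩

theorem linearIndependent_orbitSum (hR : IsOrbitTransversal G S R) :
    LinearIndependent K fun r : R => orbitSum G e ε (r : ι) := by
  refine .of_pairwise_dual_eq_zero_one _ (fun r : R => e.coord r) (fun r r' hne => ?_) fun r => ?_
  · simp [repr_orbitSum_of_mem e ε hR, hne]
  · simp [repr_orbitSum_of_mem e ε hR]

theorem span_orbitSum (hR : IsOrbitTransversal G S R) {ρ : G → M →ₗ[K] M} {χ : G → ι → K}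
    (hρ : ∀ g i, ρ g (e i) = χ g i • e (g • i)) (hS : ∀ g : G, ∀ i ∈ S, g • i ∈ S)
    (hε : ∀ g, ∀ i ∈ S, (ε (g • i) : K) = χ g i * ε i)
    (hstab : ∀ i ∉ S, ∃ g : G, g • i = i ∧ ∀ c, c = χ g i * c → c = 0) :
    Submodule.span K (Set.range fun r : R => orbitSum G e ε (r : ι)) = commonFixed ρ := by
  have hle : Submodule.span K (Set.range fun r : R => orbitSum G e ε (r : ι)) ≤ commonFixed ρ := by
    refine Submodule.span_le.2 (Set.range_subset_iff.2 fun r => ?_)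
    refine orbitSum_mem_commonFixed e ε hρ ?_
    rintro g _ ⟨h, rfl⟩
    exact hε g _ (hS h r (hR.subset r.2))
  refine le_antisymm hle fun x hx => ?_
  let c : R →₀ K := (e.repr x).subtypeDomain (· ∈ R)
  let y := Finsupp.linearCombination K (fun r : R => orbitSum G e ε (r : ι)) c
  have hy : y ∈ Submodule.span K (Set.range fun r : R => orbitSum G e ε (r : ι)) :=
    Finsupp.mem_span_range_iff_exists_finsupp.2 ⟨c, rfl⟩
  have hcoeff (r : R) : e.repr y r = e.repr x r := by
    simp +contextual [y, c, Finsupp.linearCombination_apply, Finsupp.sum, Finsupp.finsetSum_apply,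
      repr_orbitSum_of_mem e ε hR, eq_comm]
  have hxy : x - y = 0 := by
    refine eq_zero_of_repr_eq_zero_on (R := R) hρ hstab (fun i hi => ?_) (sub_mem hx (hle hy))
      fun r hr => ?_
    · obtain ⟨r, ⟨hr, hri⟩, -⟩ := hR.existsUnique i hi
      exact ⟨r, hr, MulAction.mem_orbit_symm.1 hri⟩
    · rw [map_sub, Finsupp.sub_apply, hcoeff ⟨r, hr⟩, sub_self]
  rwa [sub_eq_zero.1 hxy]

theorem span_nsmul_orbitSum (hR : IsOrbitTransversal G S R) {m : ι → ℕ}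
    (hm : ∀ (g : G) i, m (g • i) = m i) :
    Submodule.span K (Set.range fun r : R => m r • orbitSum G e ε (r : ι)) =
      Submodule.span K ((fun i => m i • orbitSum G e ε i) '' S) := by
  refine le_antisymm (Submodule.span_mono ?_) (Submodule.span_le.2 ?_)
  · rintro _ ⟨r, rfl⟩
    exact ⟨r, hR.subset r.2, rfl⟩
  · rintro _ ⟨i, hi, rfl⟩
    obtain ⟨r, ⟨hr, g, hg⟩, -⟩ := hR.existsUnique i hi
    have hri : i ∈ MulAction.orbit G r := MulAction.mem_orbit_symm.1 ⟨g, hg⟩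
    have hmr : m r = m i := hg ▸ hm g i
    have heq : m i • orbitSum G e ε i = ((ε i)⁻¹ * ε r) • m r • orbitSum G e ε r := by
      rw [orbitSum_of_mem_orbit e ε hri, hmr, smul_comm]
    simp only [SetLike.mem_coe, heq]
    exact Submodule.smul_of_tower_mem _ _ (Submodule.subset_span ⟨⟨r, hr⟩, rfl⟩)

end MonomialAction

section Words

variable {d : ℕ}

instance finite_domMulAct {G : Type*} [Finite G] : Finite Gᵈᵐᵃ := .of_equiv G DomMulAct.mk

lemma mem_orbit_iff_exists_wAct {v w : WordTriple β n d} :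
    v ∈ MulAction.orbit (Equiv.Perm (Fin d))ᵈᵐᵃ w ↔ ∃ σ : Equiv.Perm (Fin d), wAct w σ = v :=
  DomMulAct.mk.surjective.exists

lemma wAct_swap_eq_self {w : WordTriple β n d} {k l : Fin d}
    (h : (w.1 k, w.2.1 k, w.2.2 k) = (w.1 l, w.2.1 l, w.2.2 l)) :
    wAct w (Equiv.swap k l) = w := by
  have hcomp {γ : Type} {f : Fin d → γ} (hf : f k = f l) : f ∘ Equiv.swap k l = f := by
    rw [Equiv.comp_swap_eq_update, hf, Function.update_eq_self, ← hf, Function.update_eq_self]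
  simp only [Prod.mk.injEq] at h
  simp only [wAct, hcomp h.1, hcomp h.2.1, hcomp h.2.2]

lemma mco_wAct (w : WordTriple β n d) (σ : Equiv.Perm (Fin d)) (u : β × Fin n × Fin n) :
    mco (wAct w σ).1 (wAct w σ).2.1 (wAct w σ).2.2 u = mco w.1 w.2.1 w.2.2 u := by
  rw [mco, mco]
  exact card_equiv σ fun k => by rw [mem_filter_univ, mem_filter_univ]; rfl

lemma facSel_wAct (sel : β → Prop) (w : WordTriple β n d) (σ : Equiv.Perm (Fin d)) :
    facSel sel (wAct w σ).1 (wAct w σ).2.1 (wAct w σ).2.2 = facSel sel w.1 w.2.1 w.2.2 := by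
  have himage : (univ.image fun k => ((wAct w σ).1 k, (wAct w σ).2.1 k, (wAct w σ).2.2 k)) =
      univ.image fun k => (w.1 k, w.2.1 k, w.2.2 k) := by
    ext u
    simpa [wAct] using (σ.surjective.exists (p := fun k => (w.1 k, w.2.1 k, w.2.2 k) = u)).symm
  simp only [facSel, himage, mco_wAct]

lemma facSel_ne_zero (sel : β → Prop) (w : WordTriple β n d) :
    facSel sel w.1 w.2.1 w.2.2 ≠ 0 :=
  prod_ne_zero_iff.2 fun _ _ => Nat.factorial_ne_zero _

end Words

section Signs

variable {d : ℕ} (P : GoodPair 𝕜 A β)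

lemma bas_mem_ev {i : β} (hi : P.part i ≠ 2) : P.bas i ∈ P.ev := by
  have hpart : P.part i = 0 ∨ P.part i = 1 := by lia
  rw [← P.aa_sup_cc]
  exact hpart.elim (fun h => Submodule.mem_sup_left (P.bas_mem_aa i h))
    fun h => Submodule.mem_sup_right (P.bas_mem_cc i h)

lemma homog_bas (i : β) : Homog P (P.bas i) :=
  (em (P.part i = 2)).elim (fun h => .inr (P.bas_mem_od i h)) fun h => .inl (bas_mem_ev P h)

lemma bas_mem_od_iff [Nontrivial 𝕜] {i : β} : P.bas i ∈ P.od ↔ P.part i = 2 := by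
  refine ⟨fun hod => ?_, P.bas_mem_od i⟩
  by_contra hi
  exact P.bas.ne_zero i (Submodule.disjoint_def.1 P.compl.disjoint _ (bas_mem_ev P hi) hod)

lemma ang_eq_pairCount (ord : LinearOrder (A × Fin n × Fin n)) (w : WordTriple β n d) :
    ang P.od ord (P.bas ∘ w.1) w.2.1 w.2.2 = pairCount fun i j =>
      P.bas (w.1 i) ∈ P.od ∧ P.bas (w.1 j) ∈ P.od ∧ entryAt P w j < entryAt P w i := by
  rw [ang, pairCount]
  congr

lemma sgnc_eq_pairCount (σ : Equiv.Perm (Fin d)) (a : Fin d → A) :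
    sgnc P.od σ a = pairCount fun i j => σ⁻¹ j < σ⁻¹ i ∧ a i ∈ P.od ∧ a j ∈ P.od := by
  rw [sgnc, pairCount]
  congr

/-- The set `Tri^B(n,d)`. -/
def triB : Set (WordTriple β n d) := {w | IsTriB P w.1 w.2.1 w.2.2}

lemma wAct_mem_triB {w : WordTriple β n d} (hw : w ∈ triB P) (σ : Equiv.Perm (Fin d)) :
    wAct w σ ∈ triB P := fun k l hkl => hw (σ k) (σ l) (σ.injective.ne hkl)

/-- The sign `(-1)^⟨𝐛,𝐫,𝐬⟩` of a word with respect to the total order `ord`. -/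
def ordSign (ord : LinearOrder (A × Fin n × Fin n)) (w : WordTriple β n d) : 𝕜ˣ :=
  (-1) ^ ang P.od ord (P.bas ∘ w.1) w.2.1 w.2.2

/-- The sign `(-1)^⟨σ;𝐛⟩` by which `σ` acts on the basis vector indexed by a word. -/
def actSign (g : (Equiv.Perm (Fin d))ᵈᵐᵃ) (w : WordTriple β n d) : 𝕜 :=
  (-1) ^ sgnc P.od (DomMulAct.mk.symm g) (P.bas ∘ w.1)

lemma even_sgnc_add_ang [Nontrivial 𝕜] (ord : LinearOrder (A × Fin n × Fin n))
    {w : WordTriple β n d} (hw : w ∈ triB P) (σ : Equiv.Perm (Fin d)) :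
    Even (sgnc P.od σ (P.bas ∘ w.1) + (ang P.od ord (P.bas ∘ w.1) w.2.1 w.2.2 +
      ang P.od ord (P.bas ∘ (wAct w σ).1) (wAct w σ).2.1 (wAct w σ).2.2)) := by
  rw [sgnc_eq_pairCount, ang_eq_pairCount, ang_eq_pairCount]
  refine even_pairCount_inv_add (o := fun i => P.bas (w.1 i) ∈ P.od)
    (g := fun i j => entryAt P w j < entryAt P w i) (fun i j hij hi _ => ?_) σ
  have hne : entryAt P w j ≠ entryAt P w i := fun h => by
    simp only [entryAt, Prod.mk.injEq, P.bas.injective.eq_iff] at h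
    exact hw i j hij (by simp [h]) ((bas_mem_od_iff P).1 hi)
  exact ⟨fun h => h.not_gt, hne.lt_or_gt.resolve_right⟩

lemma ordSign_smul (ord : LinearOrder (A × Fin n × Fin n)) (g : (Equiv.Perm (Fin d))ᵈᵐᵃ)
    {w : WordTriple β n d} (hw : w ∈ triB P) :
    (ordSign P ord (g • w) : 𝕜) = actSign P g w * ordSign P ord w := by
  nontriviality 𝕜
  obtain ⟨σ, rfl⟩ := DomMulAct.mk.surjective g
  have heven := even_sgnc_add_ang P ord hw σ
  simp only [ordSign, actSign, Units.val_pow_eq_pow_val, Units.val_neg, Units.val_one, ← pow_add]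
  refine neg_one_pow_congr ?_
  rw [Equiv.symm_apply_apply, ← Nat.even_add, add_comm, add_assoc]
  exact heven

lemma exists_stabilizer_of_notMem_triB [IsAddTorsionFree 𝕜] {w : WordTriple β n d}
    (hw : w ∉ triB P) :
    ∃ g : (Equiv.Perm (Fin d))ᵈᵐᵃ, g • w = w ∧ ∀ c, c = actSign P g w * c → c = 0 := by
  obtain ⟨k, l, hkl, heq, hodd⟩ : ∃ k l, k < l ∧
      (w.1 k, w.2.1 k, w.2.2 k) = (w.1 l, w.2.1 l, w.2.2 l) ∧ P.part (w.1 k) = 2 := by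
    simp only [triB, Set.mem_ofPred_eq, IsTriB, not_forall, not_not] at hw
    obtain ⟨k, l, hne, heq, hodd⟩ := hw
    rcases hne.lt_or_gt with h | h
    · exact ⟨k, l, h, heq, hodd⟩
    · exact ⟨l, k, h, heq.symm, (congrArg (P.part ·.1) heq).symm.trans hodd⟩
  have hodd' : P.part (w.1 l) = 2 := (congrArg (P.part ·.1) heq).symm.trans hodd
  refine ⟨DomMulAct.mk (Equiv.swap k l), wAct_swap_eq_self heq, fun c hc => ?_⟩
  have hsign : actSign P (DomMulAct.mk (Equiv.swap k l)) w = -1 := by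
    rw [actSign, Equiv.symm_apply_apply, sgnc_eq_pairCount]
    exact (odd_pairCount_inv_swap hkl (P.bas_mem_od _ hodd) (P.bas_mem_od _ hodd')).neg_one_pow
  rw [hsign, neg_one_mul] at hc
  exact self_eq_neg.1 hc

end Signs

section Schur

variable {d : ℕ} {P : GoodPair 𝕜 A β} (D : Tower 𝕜 A β n T P)
  (ord : LinearOrder (A × Fin n × Fin n))

lemma act_bas (g : (Equiv.Perm (Fin d))ᵈᵐᵃ) (w : WordTriple β n d) :
    D.act (DomMulAct.mk.symm g) (D.bas d w) = actSign P g w • D.bas d (g • w) := by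
  obtain ⟨b, r, s⟩ := w
  rw [D.bas_eq, D.act_X _ _ _ _ fun k => homog_bas P _, ← Int.cast_smul_eq_zsmul 𝕜, Int.cast_pow,
    Int.cast_neg, Int.cast_one]
  exact congrArg _ (D.bas_eq d _ _ _).symm

lemma SchurS_eq_commonFixed :
    SchurS D d =
      commonFixed fun g : (Equiv.Perm (Fin d))ᵈᵐᵃ => D.act (DomMulAct.mk.symm g) :=
  Submodule.ext fun x => (DomMulAct.mk.symm.surjective.forall (p := fun σ => D.act σ x = x)).trans
    mem_commonFixed.symm

lemma xiB_eq_orbitSum (w : WordTriple β n d) :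
    xiB D ord w.1 w.2.1 w.2.2 =
      orbitSum (Equiv.Perm (Fin d))ᵈᵐᵃ (D.bas d) (ordSign P ord) w := by
  rcases subsingleton_or_nontrivial 𝕜
  · have := Module.subsingleton 𝕜 (T d)
    exact Subsingleton.elim _ _
  let toA (v : WordTriple β n d) := (P.bas ∘ v.1, v.2.1, v.2.2)
  have hinj : Function.Injective toA := P.bas.injective.comp_left.prodMap Function.injective_id
  have himage : (univ.image fun σ : Equiv.Perm (Fin d) =>
      (P.bas ∘ w.1 ∘ σ, w.2.1 ∘ σ, w.2.2 ∘ σ)) =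
      (Set.finite_range fun g : (Equiv.Perm (Fin d))ᵈᵐᵃ => g • w).toFinset.image toA := by
    ext u
    simp only [mem_image, mem_univ, true_and, Set.Finite.mem_toFinset, Set.exists_range_iff,
      DomMulAct.mk.surjective.exists]
    rfl
  have hcoeff (v : WordTriple β n d) :
      (((-1 : ℤ) ^ (ang P.od ord (P.bas ∘ w.1) w.2.1 w.2.2 +
        ang P.od ord (P.bas ∘ v.1) v.2.1 v.2.2) : ℤ) : 𝕜) =
      ((ordSign P ord w)⁻¹ * ordSign P ord v : 𝕜ˣ) := by
    simp [ordSign, pow_add]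
  rw [xiB, xiH, orbitSum]
  refine (sum_congr himage fun _ _ => rfl).trans ((sum_image hinj.injOn).trans ?_)
  refine sum_congr rfl fun v _ => ?_
  rw [Units.smul_def, ← hcoeff v, Int.cast_smul_eq_zsmul 𝕜, D.bas_eq]
  rfl

lemma eta_eq_nsmul_orbitSum (w : WordTriple β n d) :
    eta D ord w.1 w.2.1 w.2.2 = facSel (fun i => P.part i = 1) w.1 w.2.1 w.2.2 •
      orbitSum (Equiv.Perm (Fin d))ᵈᵐᵃ (D.bas d) (ordSign P ord) w := by
  rw [eta, xiB_eq_orbitSum]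

lemma SchurT_eq_span :
    SchurT D ord d = Submodule.span 𝕜 ((fun w : WordTriple β n d =>
      eta D ord w.1 w.2.1 w.2.2) '' triB P) :=
  congrArg (Submodule.span 𝕜) <| Set.ext fun _ =>
    ⟨fun ⟨b, r, s, h, hx⟩ => ⟨(b, r, s), h, hx.symm⟩, fun ⟨_, h, hx⟩ => ⟨_, _, _, h, hx.symm⟩⟩

end Schur

theorem statement1_general {𝕜 A β : Type} [CommRing 𝕜] [IsAddTorsionFree 𝕜]
    [NonUnitalRing A] [Module 𝕜 A]
    {n : ℕ} {T : ℕ → Type} [∀ e, NonUnitalRing (T e)] [∀ e, Module 𝕜 (T e)]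
    (P : GoodPair 𝕜 A β) (D : Tower 𝕜 A β n T P) (ord : LinearOrder (A × Fin n × Fin n))
    (d : ℕ) (R : Set (WordTriple β n d))
    (hR1 : ∀ w ∈ R, IsTriB P w.1 w.2.1 w.2.2)
    (hR2 : ∀ w : WordTriple β n d, IsTriB P w.1 w.2.1 w.2.2 →
      ∃! w' : WordTriple β n d, w' ∈ R ∧ ∃ σ : Equiv.Perm (Fin d), wAct w σ = w') :
    (LinearIndependent 𝕜 (fun w : R => xiB D ord (w : WordTriple β n d).1
        (w : WordTriple β n d).2.1 (w : WordTriple β n d).2.2) ∧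
      Submodule.span 𝕜 (Set.range fun w : R => xiB D ord (w : WordTriple β n d).1
        (w : WordTriple β n d).2.1 (w : WordTriple β n d).2.2) = SchurS D d) ∧
    (LinearIndependent 𝕜 (fun w : R => eta D ord (w : WordTriple β n d).1
        (w : WordTriple β n d).2.1 (w : WordTriple β n d).2.2) ∧
      Submodule.span 𝕜 (Set.range fun w : R => eta D ord (w : WordTriple β n d).1
        (w : WordTriple β n d).2.1 (w : WordTriple β n d).2.2) = SchurT D ord d) := by
  have hR : IsOrbitTransversal (Equiv.Perm (Fin d))ᵈᵐᵃ (triB P) R :=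
    ⟨hR1, fun w hw => by simpa only [mem_orbit_iff_exists_wAct] using hR2 w hw⟩
  have hindep := linearIndependent_orbitSum (D.bas d) (ordSign P ord) hR
  rw [SchurT_eq_span, SchurS_eq_commonFixed]
  simp only [xiB_eq_orbitSum, eta_eq_nsmul_orbitSum]
  refine ⟨⟨hindep, ?_⟩, linearIndependent_nsmul hindep fun w => facSel_ne_zero _ w.1, ?_⟩
  · exact span_orbitSum _ _ hR (act_bas D) (fun g w hw => wAct_mem_triB P hw (DomMulAct.mk.symm g))
      (fun g w hw => ordSign_smul P ord g hw) fun w hw => exists_stabilizer_of_notMem_triB P hw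
  · exact span_nsmul_orbitSum (m := fun w => facSel (fun i => P.part i = 1) w.1 w.2.1 w.2.2) _ _ hR
      fun g w => facSel_wAct _ w (DomMulAct.mk.symm g)

/-- Choose one representative from each `S_d`-orbit on `Tri^B(n,d)`
(encoded by the set `R` of word triples with the hypotheses `hR1`, `hR2`).  Then the
corresponding elements `ξ^𝐛_{𝐫,𝐬}` form a `𝕜`-basis of the free `𝕜`-module `S^A(n,d)`
(they are linearly independent and span the invariants), and the corresponding elements
`η^𝐛_{𝐫,𝐬}` form a `𝕜`-basis of `T^A_𝔞(n,d)`. -/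
theorem statement1 {𝕜 A β : Type} [CommRing 𝕜] [IsDomain 𝕜] [CharZero 𝕜]
    [NonUnitalRing A] [Module 𝕜 A] [SMulCommClass 𝕜 A A] [IsScalarTower 𝕜 A A]
    {n : ℕ} (hn : 0 < n) {T : ℕ → Type} [∀ e, NonUnitalRing (T e)] [∀ e, Module 𝕜 (T e)]
    (P : GoodPair 𝕜 A β) (D : Tower 𝕜 A β n T P) (ord : LinearOrder (A × Fin n × Fin n))
    (d : ℕ) (R : Set (WordTriple β n d))
    (hR1 : ∀ w ∈ R, IsTriB P w.1 w.2.1 w.2.2)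
    (hR2 : ∀ w : WordTriple β n d, IsTriB P w.1 w.2.1 w.2.2 →
      ∃! w' : WordTriple β n d, w' ∈ R ∧ ∃ σ : Equiv.Perm (Fin d), wAct w σ = w') :
    (LinearIndependent 𝕜 (fun w : R => xiB D ord (w : WordTriple β n d).1
        (w : WordTriple β n d).2.1 (w : WordTriple β n d).2.2) ∧
      Submodule.span 𝕜 (Set.range fun w : R => xiB D ord (w : WordTriple β n d).1
        (w : WordTriple β n d).2.1 (w : WordTriple β n d).2.2) = SchurS D d) ∧
    (LinearIndependent 𝕜 (fun w : R => eta D ord (w : WordTriple β n d).1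
        (w : WordTriple β n d).2.1 (w : WordTriple β n d).2.2) ∧
      Submodule.span 𝕜 (Set.range fun w : R => eta D ord (w : WordTriple β n d).1
        (w : WordTriple β n d).2.1 (w : WordTriple β n d).2.2) = SchurT D ord d) := by
  exact statement1_general P D ord d R hR1 hR2

end GS
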